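/- arXiv:1810.04385 — 3 statements merged into one kernel-verified Lean document; each statement's English description precedes it below -/
import Mathlib

section
/- Fix N, K ≥ 1, channel gains h : Fin N → Fin K → ℝ with h i k ≥ 0, noise power σ² > 0, weights w : Fin K → ℝ with w k ≥ 0, auxiliary parameters α : Fin K → ℝ with α k ≥ 0, β : Fin K → ℝ, and circuit powers p^c : Fin K → ℝ with p^c k ≥ 0. For each k define f_k : (Fin N → ℝ) × ℝ → ℝ by f_k(s, τ) = w k · τ · ln(1 + (Σ_i h i k · s i)/(σ² · τ)) − β k · (Σ_i s i + τ · p^c k) for τ > 0, and f_k(s, 0) = −β k · Σ_i s i. Then the function (s, τ) ↦ Σ_k α k · f_k(s(·, k), τ k), where s : Fin N → Fin K → ℝ and τ : Fin K → ℝ, is concave on the convex set { (s, τ) : s i k ≥ 0 for all i, k and 0 ≤ τ k ≤ 1 for all k }. -/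
open Real

/-!
The rate term `τ * log (1 + h·s / (σ² τ))` is the perspective of the concave function
`s ↦ log (1 + h·s / σ²)`. A perspective is positively homogeneous, so its concavity amounts to
superadditivity: for positive times this is concavity of the original function, and at the boundary
`τ = 0`, where the perspective vanishes, it is monotonicity. The energy cost is linear in `(s, τ)`.
-/

open Set

section ConcaveSum

variable {𝕜 E F κ : Type*} [Semiring 𝕜] [PartialOrder 𝕜] [AddCommMonoid E] [SMul 𝕜 E]
  [AddCommMonoid F] [PartialOrder F] [IsOrderedAddMonoid F] [Module 𝕜 F]

lemma concaveOn_finset_sum {C : Set E} (hC : Convex 𝕜 C) (t : Finset κ) {f : κ → E → F}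
    (hf : ∀ k ∈ t, ConcaveOn 𝕜 C (f k)) : ConcaveOn 𝕜 C (fun x => ∑ k ∈ t, f k x) := by
  rw [← Finset.sum_fn]
  exact Finset.sum_induction f (ConcaveOn 𝕜 C) (fun _ _ => ConcaveOn.add) (concaveOn_const 0 hC) hf

end ConcaveSum

section Perspective

variable {𝕜 E F : Type*} [Field 𝕜] [AddCommMonoid E] [Module 𝕜 E] [AddCommMonoid F]
  [Module 𝕜 F]

/-- The perspective `(x, t) ↦ t • f (x / t)` of `f`, which turns a concave function into a jointly
concave one. At `t = 0` its value is `0 • f 0 = 0`. -/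
def perspective (f : E → F) (p : E × 𝕜) : F :=
  p.2 • f (p.2⁻¹ • p.1)

lemma perspective_zero_right (f : E → F) (x : E) : perspective f (x, (0 : 𝕜)) = 0 :=
  zero_smul 𝕜 _

lemma perspective_smul (f : E → F) (c : 𝕜) (p : E × 𝕜) :
    perspective f (c • p) = c • perspective f p := by
  rcases eq_or_ne c 0 with rfl | hc
  · simp only [perspective, zero_smul, Prod.snd_zero]
  · have cancel : (c * p.2)⁻¹ * c = p.2⁻¹ := by
      rw [mul_inv_rev, inv_mul_cancel_right₀ hc]
    simp only [perspective, Prod.smul_fst, Prod.smul_snd, smul_eq_mul, smul_smul, cancel]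

variable [LinearOrder 𝕜] [IsStrictOrderedRing 𝕜] [PartialOrder F] [PosSMulMono 𝕜 F]
  {f : E → F}

lemma perspective_add_le_of_pos {C : Set E} (hf : ConcaveOn 𝕜 C f) {x y : E} {t u : 𝕜} (ht : 0 < t)
    (hu : 0 < u) (hx : t⁻¹ • x ∈ C) (hy : u⁻¹ • y ∈ C) :
    perspective f (x, t) + perspective f (y, u) ≤ perspective f (x + y, t + u) := by
  have htu : 0 < t + u := add_pos ht hu
  calc t • f (t⁻¹ • x) + u • f (u⁻¹ • y)
      = (t + u) • ((t / (t + u)) • f (t⁻¹ • x) + (u / (t + u)) • f (u⁻¹ • y)) := by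
        simp only [smul_add, smul_smul, mul_div_cancel₀ _ htu.ne']
    _ ≤ (t + u) • f ((t / (t + u)) • t⁻¹ • x + (u / (t + u)) • u⁻¹ • y) :=
        smul_le_smul_of_nonneg_left ((concaveOn_iff_div.1 hf).2 hx hy ht.le hu.le htu) htu.le
    _ = (t + u) • f ((t + u)⁻¹ • (x + y)) := by
        simp only [smul_add, smul_smul, div_mul_eq_mul_div, mul_inv_cancel₀ ht.ne',
          mul_inv_cancel₀ hu.ne', one_div]

variable [PartialOrder E] [IsOrderedAddMonoid E] [PosSMulMono 𝕜 E]

lemma perspective_le_add_of_monotoneOn (hf : MonotoneOn f (Ici 0)) {x y : E}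
    {t : 𝕜} (hx : 0 ≤ x) (hy : 0 ≤ y) (ht : 0 ≤ t) :
    perspective f (x, t) ≤ perspective f (x + y, t) := by
  have hinv : 0 ≤ t⁻¹ := inv_nonneg.2 ht
  exact smul_le_smul_of_nonneg_left
    (hf (smul_nonneg hinv hx) (smul_nonneg hinv (add_nonneg hx hy))
      (smul_le_smul_of_nonneg_left (le_add_of_nonneg_right hy) hinv)) ht

lemma perspective_add_le (hf : ConcaveOn 𝕜 (Ici 0) f)
    (hmono : MonotoneOn f (Ici 0)) {p q : E × 𝕜} (hp : 0 ≤ p) (hq : 0 ≤ q) :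
    perspective f p + perspective f q ≤ perspective f (p + q) := by
  obtain ⟨x, t⟩ := p
  obtain ⟨y, u⟩ := q
  obtain ⟨hx : 0 ≤ x, ht : 0 ≤ t⟩ := hp
  obtain ⟨hy : 0 ≤ y, hu : 0 ≤ u⟩ := hq
  rw [Prod.mk_add_mk]
  rcases ht.eq_or_lt with rfl | ht
  · rw [perspective_zero_right, zero_add, zero_add, add_comm x]
    exact perspective_le_add_of_monotoneOn hmono hy hx hu
  rcases hu.eq_or_lt with rfl | hu
  · rw [perspective_zero_right, add_zero, add_zero]
    exact perspective_le_add_of_monotoneOn hmono hx hy ht.le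
  exact perspective_add_le_of_pos hf ht hu (smul_nonneg (inv_nonneg.2 ht.le) hx)
    (smul_nonneg (inv_nonneg.2 hu.le) hy)

theorem concaveOn_perspective (hf : ConcaveOn 𝕜 (Ici 0) f)
    (hmono : MonotoneOn f (Ici 0)) : ConcaveOn 𝕜 (Ici (0 : E × 𝕜)) (perspective f) := by
  refine ⟨convex_Ici 0, fun p hp q hq a b ha hb _ => ?_⟩
  rw [← perspective_smul, ← perspective_smul]
  exact perspective_add_le hf hmono (smul_nonneg ha hp) (smul_nonneg hb hq)

end Perspective

section LogOneAdd

variable {E : Type*} [AddCommGroup E] [PartialOrder E] [IsOrderedAddMonoid E] [Module ℝ E]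
  {ℓ : E →ₗ[ℝ] ℝ}

lemma concaveOn_log_one_add_linearMap [PosSMulMono ℝ E]
    (hℓ : ∀ x, 0 ≤ x → 0 ≤ ℓ x) : ConcaveOn ℝ (Ici 0) (fun x => log (1 + ℓ x)) :=
  ((strictConcaveOn_log_Ioi.concaveOn.translate_right 1).comp_linearMap ℓ).subset
    (fun x hx => add_pos_of_pos_of_nonneg one_pos (hℓ x hx)) (convex_Ici 0)

lemma monotoneOn_log_one_add_linearMap (hℓ : ∀ x, 0 ≤ x → 0 ≤ ℓ x) :
    MonotoneOn (fun x => log (1 + ℓ x)) (Ici 0) := by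
  intro x hx y _ hxy
  have hmono : ℓ x ≤ ℓ y := by
    simpa only [map_sub, sub_nonneg] using hℓ (y - x) (sub_nonneg.2 hxy)
  exact log_le_log (add_pos_of_pos_of_nonneg one_pos (hℓ x hx)) (by gcongr)

end LogOneAdd

section UserObjective

variable {ι κ : Type*}

lemma convex_feasibleSet :
    Convex ℝ {p : (ι → κ → ℝ) × (κ → ℝ) |
      (∀ i k, 0 ≤ p.1 i k) ∧ ∀ k, 0 ≤ p.2 k ∧ p.2 k ≤ 1} := by
  simp only [forall_and]
  exact (convex_Ici 0).prod (convex_Icc 0 1)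

variable [Fintype ι]

/-- The contribution `f_k (s, τ)` of a single user to the subtractive-form objective: `w` times the
rate of the user minus `β` times its energy consumption, extended by `-β ∑ s` to `τ = 0`. -/
noncomputable def userObjective (h : ι → ℝ) (σ2 w β pc : ℝ) (q : (ι → ℝ) × ℝ) : ℝ :=
  if 0 < q.2 then
    w * q.2 * log (1 + (∑ i, h i * q.1 i) / (σ2 * q.2)) - β * ((∑ i, q.1 i) + q.2 * pc)
  else -(β * ∑ i, q.1 i)

/-- The signal-to-noise ratio `(∑ h s) / σ2`, as a linear functional of the powers `s`. -/
noncomputable def snr (h : ι → ℝ) (σ2 : ℝ) : (ι → ℝ) →ₗ[ℝ] ℝ :=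
  σ2⁻¹ • ∑ i, h i • LinearMap.proj i

/-- The energy `∑ s + τ * pc` used by a user, transmission plus circuit, as a linear functional of
`(s, τ)`. -/
def consumedEnergy (pc : ℝ) : (ι → ℝ) × ℝ →ₗ[ℝ] ℝ :=
  (∑ i, LinearMap.proj i).coprod (pc • LinearMap.id)

lemma snr_apply (h : ι → ℝ) (σ2 : ℝ) (s : ι → ℝ) : snr h σ2 s = (∑ i, h i * s i) / σ2 := by
  simp only [snr, LinearMap.smul_apply, LinearMap.sum_apply, LinearMap.proj_apply, smul_eq_mul,
    inv_mul_eq_div]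

lemma consumedEnergy_apply (pc : ℝ) (q : (ι → ℝ) × ℝ) :
    consumedEnergy pc q = (∑ i, q.1 i) + q.2 * pc := by
  simp only [consumedEnergy, LinearMap.coprod_apply, LinearMap.sum_apply, LinearMap.proj_apply,
    LinearMap.smul_apply, LinearMap.id_apply, smul_eq_mul, mul_comm pc]

lemma snr_nonneg {h : ι → ℝ} (hh : ∀ i, 0 ≤ h i) {σ2 : ℝ} (hσ : 0 ≤ σ2) (s : ι → ℝ) (hs : 0 ≤ s) :
    0 ≤ snr h σ2 s := by
  rw [snr_apply]
  exact div_nonneg (Finset.sum_nonneg fun i _ => mul_nonneg (hh i) (hs i)) hσ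

lemma userObjective_eq_perspective_sub (h : ι → ℝ) (σ2 w β pc : ℝ) {q : (ι → ℝ) × ℝ}
    (hq : 0 ≤ q.2) :
    userObjective h σ2 w β pc q =
      w * perspective (fun s => log (1 + snr h σ2 s)) q - β * consumedEnergy pc q := by
  obtain ⟨s, τ⟩ := q
  rw [consumedEnergy_apply]
  rcases hq.eq_or_lt with rfl | hτ
  · simp [userObjective, perspective_zero_right]
  · have snr_power : snr h σ2 (τ⁻¹ • s) = (∑ i, h i * s i) / (σ2 * τ) := by
      rw [map_smul, snr_apply, smul_eq_mul, inv_mul_eq_div, div_div]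
    simp only [userObjective, perspective, if_pos hτ, snr_power, smul_eq_mul, mul_assoc]

lemma concaveOn_userObjective {h : ι → ℝ} (hh : ∀ i, 0 ≤ h i) {σ2 : ℝ} (hσ : 0 ≤ σ2) {w : ℝ}
    (hw : 0 ≤ w) (β pc : ℝ) : ConcaveOn ℝ (Ici 0) (userObjective h σ2 w β pc) := by
  have rate_concave : ConcaveOn ℝ (Ici (0 : (ι → ℝ) × ℝ))
      (perspective fun s => log (1 + snr h σ2 s)) :=
    concaveOn_perspective (concaveOn_log_one_add_linearMap (snr_nonneg hh hσ))
      (monotoneOn_log_one_add_linearMap (snr_nonneg hh hσ))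
  have cost_convex : ConvexOn ℝ (Ici (0 : (ι → ℝ) × ℝ)) (β • consumedEnergy pc) :=
    (β • consumedEnergy pc).convexOn (convex_Ici 0)
  exact ((rate_concave.smul hw).sub cost_convex).congr fun q hq =>
    (userObjective_eq_perspective_sub h σ2 w β pc hq.2).symm

theorem subtractive_objective_concave_general [Fintype κ] {h : ι → κ → ℝ}
    (hh : ∀ i k, 0 ≤ h i k) {σ2 : ℝ} (hσ : 0 < σ2) {w : κ → ℝ} (hw : ∀ k, 0 ≤ w k)
    {α : κ → ℝ} (hα : ∀ k, 0 ≤ α k) (β pc : κ → ℝ) :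
    ConcaveOn ℝ (Ici (0 : (ι → κ → ℝ) × (κ → ℝ))) (fun p => ∑ k,
      α k * userObjective (fun i => h i k) σ2 (w k) (β k) (pc k) (fun i => p.1 i k, p.2 k)) := by
  refine concaveOn_finset_sum (convex_Ici 0) Finset.univ fun k _ => ?_
  let userVars : (ι → κ → ℝ) × (κ → ℝ) →ₗ[ℝ] (ι → ℝ) × ℝ :=
    (LinearMap.pi fun i => LinearMap.proj k ∘ₗ LinearMap.proj i).prodMap (LinearMap.proj k)
  have user_concave := concaveOn_userObjective (fun i => hh i k) hσ.le (hw k) (β k) (pc k)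
  exact ((user_concave.comp_linearMap userVars).subset
    (fun _ hp => ⟨fun i => hp.1 i k, hp.2 k⟩) (convex_Ici 0)).smul (hα k)

end UserObjective

/-- Lemma 2 of the paper: the objective of the parameterized subtractive-form
UC-EE problem is jointly concave in the energy variables `s` and time
allocations `τ`. -/
theorem subtractive_objective_concave
    (N K : ℕ) (hN : 1 ≤ N) (hK : 1 ≤ K)
    (h : Fin N → Fin K → ℝ) (hh : ∀ i k, 0 ≤ h i k)
    (σ2 : ℝ) (hσ : 0 < σ2)
    (w : Fin K → ℝ) (hw : ∀ k, 0 ≤ w k)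
    (α : Fin K → ℝ) (hα : ∀ k, 0 ≤ α k)
    (β : Fin K → ℝ)
    (pc : Fin K → ℝ) (hpc : ∀ k, 0 ≤ pc k) :
    ConcaveOn ℝ
      {p : (Fin N → Fin K → ℝ) × (Fin K → ℝ) |
        (∀ i k, 0 ≤ p.1 i k) ∧ ∀ k, 0 ≤ p.2 k ∧ p.2 k ≤ 1}
      (fun p => ∑ k,
        α k *
          (if 0 < p.2 k then
            w k * p.2 k * Real.log (1 + (∑ i, h i k * p.1 i k) / (σ2 * p.2 k)) -
              β k * ((∑ i, p.1 i k) + p.2 k * pc k)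
          else -(β k * ∑ i, p.1 i k))) :=
  (subtractive_objective_concave_general hh hσ hw hα β pc).subset
    (fun _ hp => ⟨fun i k => hp.1 i k, fun k => (hp.2 k).1⟩) convex_feasibleSet
end

section
/- For every S > 0, σ² > 0, and c > 0, there exists a unique τ > 0 such that ln(1 + S/(σ² · τ)) − S/(σ² · τ + S) = c. -/
/-!
With `u = 1 + S / (σ2 * τ)` the left-hand side of the equation becomes `log u - (1 - u⁻¹)`, the gap
in the classical inequality `1 - u⁻¹ ≤ log u`. The gap vanishes at `u = 1`, has derivative
`(u - 1) / u ^ 2`, and tends to infinity, so it maps `(1, ∞)` bijectively onto `(0, ∞)`; and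
`τ ↦ u` is a bijection of `(0, ∞)` onto `(1, ∞)`.
-/

open Filter Set

lemma bijOn_Ioi_of_strictMonoOn {α β : Type*}
    [ConditionallyCompleteLinearOrder α] [TopologicalSpace α] [OrderTopology α] [DenselyOrdered α]
    [LinearOrder β] [TopologicalSpace β] [OrderClosedTopology β] {f : α → β} {a : α}
    (hmono : StrictMonoOn f (Ici a)) (hcont : ContinuousOn f (Ici a))
    (htop : Tendsto f atTop atTop) : BijOn f (Ioi a) (Ioi (f a)) :=
  ⟨fun _ hx => hmono self_mem_Ici (Ioi_subset_Ici_self hx) hx,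
    hmono.injOn.mono Ioi_subset_Ici_self, intermediate_value_Ioi hcont htop⟩

lemma bijOn_one_add_div {K : Type*} [Field K] [LinearOrder K] [IsStrictOrderedRing K] {a : K}
    (ha : 0 < a) : BijOn (fun x => 1 + a / x) (Ioi 0) (Ioi 1) := by
  have hinv : InvOn (fun u => a / (u - 1)) (fun x => 1 + a / x) (Ioi 0) (Ioi 1) :=
    ⟨fun x _ => by simp [div_div_cancel₀ ha.ne'], fun u _ => by simp [div_div_cancel₀ ha.ne']⟩
  exact hinv.bijOn (fun x hx => lt_add_of_pos_right 1 (div_pos ha hx))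
    (fun u hu => div_pos ha (sub_pos.2 hu))

lemma bijOn_mul_left_Ioi {G₀ : Type*} [GroupWithZero G₀] [PartialOrder G₀] [PosMulReflectLT G₀]
    {a : G₀} (ha : 0 < a) (b : G₀) : BijOn (a * ·) (Ioi b) (Ioi (a * b)) :=
  image_mul_left_Ioi ha b ▸ (mul_right_injective₀ ha.ne').bijOn_image

lemma div_add_eq_one_sub_inv_one_add_div {K : Type*} [DivisionRing K] {x y : K} (hx : x ≠ 0)
    (hxy : x + y ≠ 0) : y / (x + y) = 1 - (1 + y / x)⁻¹ := by
  rw [one_add_div hx, inv_div, one_sub_div hxy, add_sub_cancel_left]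

lemma hasDerivAt_log_sub_one_sub_inv {u : ℝ} (hu : u ≠ 0) :
    HasDerivAt (fun u => Real.log u - (1 - u⁻¹)) ((u - 1) / u ^ 2) u :=
  ((Real.hasDerivAt_log hu).sub ((hasDerivAt_inv hu).const_sub 1)).congr_deriv (by field_simp)

lemma continuousOn_log_sub_one_sub_inv :
    ContinuousOn (fun u : ℝ => Real.log u - (1 - u⁻¹)) {0}ᶜ :=
  fun _ hu => (hasDerivAt_log_sub_one_sub_inv hu).continuousAt.continuousWithinAt

lemma strictMonoOn_log_sub_one_sub_inv :
    StrictMonoOn (fun u : ℝ => Real.log u - (1 - u⁻¹)) (Ici 1) := by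
  have hcont : ContinuousOn (fun u : ℝ => Real.log u - (1 - u⁻¹)) (Ici 1) :=
    continuousOn_log_sub_one_sub_inv.mono fun _ hu => (zero_lt_one.trans_le hu).ne'
  refine strictMonoOn_of_deriv_pos (convex_Ici 1) hcont fun u hu => ?_
  have hu1 : 1 < u := by simpa using hu
  have hu0 : 0 < u := zero_lt_one.trans hu1
  rw [(hasDerivAt_log_sub_one_sub_inv hu0.ne').deriv]
  exact div_pos (sub_pos.2 hu1) (pow_pos hu0 2)

lemma tendsto_log_sub_one_sub_inv_atTop :
    Tendsto (fun u : ℝ => Real.log u - (1 - u⁻¹)) atTop atTop := by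
  simpa only [sub_eq_add_neg] using
    Real.tendsto_log_atTop.atTop_add (tendsto_inv_atTop_zero.const_sub (1 : ℝ)).neg

lemma bijOn_log_sub_one_sub_inv :
    BijOn (fun u : ℝ => Real.log u - (1 - u⁻¹)) (Ioi 1) (Ioi 0) := by
  simpa using bijOn_Ioi_of_strictMonoOn strictMonoOn_log_sub_one_sub_inv
    (continuousOn_log_sub_one_sub_inv.mono fun _ hu => (zero_lt_one.trans_le hu).ne')
    tendsto_log_sub_one_sub_inv_atTop

lemma bijOn_log_one_add_div_sub_div {a : ℝ} (ha : 0 < a) :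
    BijOn (fun x => Real.log (1 + a / x) - a / (x + a)) (Ioi 0) (Ioi 0) := by
  refine (bijOn_log_sub_one_sub_inv.comp (bijOn_one_add_div ha)).congr fun x hx => ?_
  simp only [Function.comp_apply,
    div_add_eq_one_sub_inv_one_add_div hx.ne' (add_pos hx ha).ne']

/-- Existence and uniqueness of the stationary point of the Lagrangian in the
time variable (eqs. (27)–(28) of the paper). -/
theorem stationary_time_exists_unique (S σ2 c : ℝ) (hS : 0 < S) (hσ : 0 < σ2)
    (hc : 0 < c) :
    ∃! τ : ℝ, 0 < τ ∧
      Real.log (1 + S / (σ2 * τ)) - S / (σ2 * τ + S) = c := by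
  have hscale : BijOn (σ2 * ·) (Ioi 0) (Ioi 0) := by simpa using bijOn_mul_left_Ioi hσ 0
  have hbij : BijOn (fun τ => Real.log (1 + S / (σ2 * τ)) - S / (σ2 * τ + S)) (Ioi 0) (Ioi 0) :=
    (bijOn_log_one_add_div_sub_div hS).comp hscale
  obtain ⟨τ, hτ, hτc⟩ := hbij.surjOn hc
  exact ⟨τ, ⟨hτ, hτc⟩, fun t ⟨ht, htc⟩ => hbij.injOn ht hτ (htc.trans hτc.symm)⟩
end

section
/- Let X be a type, F ⊆ X nonempty, and N, D : X → ℝ with D x ≥ d for every x ∈ F, where d > 0. Let q₁ < q₂ be real numbers, suppose the set { N x − q₁ · D x : x ∈ F } is bounded above, and suppose x₂ ∈ F attains the supremum T(q₂) = sSup { N x − q₂ · D x : x ∈ F }. Then T(q₂) < T(q₁), where T(q₁) = sSup { N x − q₁ · D x : x ∈ F }. -/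
/-- The values over the feasible set `F` of the subtractive objective `N - q * D` that Dinkelbach's
method associates with the ratio `N / D`; its supremum is the paper's `T(q)`. It is spelled as a
set-builder rather than as an image so that it unfolds to the sets in
`dinkelbach_T_strict_anti`. -/
def dinkelbachValues {X : Type*} (F : Set X) (N D : X → ℝ) (q : ℝ) : Set ℝ :=
  {y : ℝ | ∃ x ∈ F, y = N x - q * D x}

section

variable {X : Type*} {F : Set X} {N D : X → ℝ} {d q₁ q₂ : ℝ}

theorem dinkelbachValues_nonempty (hF : F.Nonempty) (q : ℝ) :
    (dinkelbachValues F N D q).Nonempty :=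
  let ⟨x, hx⟩ := hF
  ⟨N x - q * D x, x, hx, rfl⟩

theorem sSup_dinkelbachValues_le_sub (hF : F.Nonempty) (hD : ∀ x ∈ F, d ≤ D x) (hq : q₁ ≤ q₂)
    (hbdd : BddAbove (dinkelbachValues F N D q₁)) :
    sSup (dinkelbachValues F N D q₂) ≤ sSup (dinkelbachValues F N D q₁) - (q₂ - q₁) * d := by
  refine csSup_le (dinkelbachValues_nonempty hF q₂) ?_
  rintro _ ⟨x, hx, rfl⟩
  have hgap : (q₂ - q₁) * d ≤ (q₂ - q₁) * D x :=
    mul_le_mul_of_nonneg_left (hD x hx) (sub_nonneg.2 hq)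
  have hle : N x - q₁ * D x ≤ sSup (dinkelbachValues F N D q₁) := le_csSup hbdd ⟨x, hx, rfl⟩
  calc
    N x - q₂ * D x = (N x - q₁ * D x) - (q₂ - q₁) * D x := by ring
    _ ≤ sSup (dinkelbachValues F N D q₁) - (q₂ - q₁) * d := sub_le_sub hle hgap

theorem dinkelbach_T_strict_anti_general (hF : F.Nonempty) (hd : 0 < d)
    (hD : ∀ x ∈ F, d ≤ D x) (hq : q₁ < q₂) (hbdd : BddAbove (dinkelbachValues F N D q₁)) :
    sSup (dinkelbachValues F N D q₂) < sSup (dinkelbachValues F N D q₁) :=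
  (sSup_dinkelbachValues_le_sub hF hD hq.le hbdd).trans_lt <|
    sub_lt_self _ (mul_pos (sub_pos.2 hq) hd)

end

/-- Strict monotonicity of the Dinkelbach value function `T(q)`: if `q₁ < q₂`
and the supremum defining `T(q₂)` is attained, then `T(q₂) < T(q₁)`. -/
theorem dinkelbach_T_strict_anti {X : Type*} (F : Set X) (hF : F.Nonempty)
    (N D : X → ℝ) (d : ℝ) (hd : 0 < d) (hD : ∀ x ∈ F, d ≤ D x)
    (q₁ q₂ : ℝ) (hq : q₁ < q₂)
    (hbdd : BddAbove {y : ℝ | ∃ x ∈ F, y = N x - q₁ * D x})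
    (x₂ : X) (hx₂ : x₂ ∈ F)
    (hattain : N x₂ - q₂ * D x₂ = sSup {y : ℝ | ∃ x ∈ F, y = N x - q₂ * D x}) :
    sSup {y : ℝ | ∃ x ∈ F, y = N x - q₂ * D x} <
      sSup {y : ℝ | ∃ x ∈ F, y = N x - q₁ * D x} :=
  dinkelbach_T_strict_anti_general hF hd hD hq hbdd
end
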